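/- Fix constants g > 0, N₀ > 0 and c > 0. Define F(p,B) = c·p / r(p,B) on the open positive quadrant Q = {(p,B) : p > 0, B > 0}, where r(p,B) = B · log₂(1 + p·g/(N₀·B)). Then F is pseudoconvex on Q: F is differentiable at every point of Q, and for all (p,B), (p',B') ∈ Q, if the Fréchet derivative of F at (p,B) applied to the direction (p' − p, B' − B) is nonnegative, then F(p',B') ≥ F(p,B). (Lemma 1, second bullet, with c = ρₙ·dₙ.) -/

import Mathlib

/-!
The rate `r(p, B)` is the perspective `B · φ(p / B)` of the concave function
`φ(u) = log₂ (1 + u g / N₀)`, hence jointly concave. So `F` is a nonnegative convex function divided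
by a positive concave one, and such quotients `f / h` are pseudoconvex: by the gradient inequalities
for `f` and `h`, the condition `h(x) f'(x)(y - x) ≥ f(x) h'(x)(y - x)` (a nonnegative derivative of
`f / h` towards `y`) yields `h(x) (f(y) - f(x)) ≥ f(x) (h(y) - h(x))`, that is,
`f(y) / h(y) ≥ f(x) / h(x)`.
-/

section Perspective

lemma inv_smul_smul_add_smul {𝕜 E : Type*} [Field 𝕜] [AddCommGroup E] [Module 𝕜 E] {s t : 𝕜}
    (hs : s ≠ 0) (ht : t ≠ 0) (a b : 𝕜) (u v : E) :
    (a * s + b * t)⁻¹ • (a • u + b • v) =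
      (a * s / (a * s + b * t)) • s⁻¹ • u + (b * t / (a * s + b * t)) • t⁻¹ • v := by
  simp only [div_eq_inv_mul, smul_add, smul_smul, mul_assoc, mul_inv_cancel₀ hs,
    mul_inv_cancel₀ ht, mul_one]

variable {𝕜 E β : Type*} [Field 𝕜] [LinearOrder 𝕜] [IsStrictOrderedRing 𝕜]
  [AddCommGroup E] [Module 𝕜 E] {s : Set E}

lemma convex_setOf_inv_smul_mem (hs : Convex 𝕜 s) :
    Convex 𝕜 {x : E × 𝕜 | 0 < x.2 ∧ x.2⁻¹ • x.1 ∈ s} := by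
  rintro x ⟨hx, hxs⟩ y ⟨hy, hys⟩ a b ha hb hab
  have ht : 0 < a * x.2 + b * y.2 := convex_Ioi (0 : 𝕜) hx hy ha hb hab
  refine ⟨ht, ?_⟩
  change (a * x.2 + b * y.2)⁻¹ • (a • x.1 + b • y.1) ∈ s
  rw [inv_smul_smul_add_smul hx.ne' hy.ne']
  exact hs hxs hys (by positivity) (by positivity) (by rw [← add_div, div_self ht.ne'])

lemma concaveOn_perspective [AddCommMonoid β] [PartialOrder β] [Module 𝕜 β] [PosSMulMono 𝕜 β]
    {φ : E → β} (hφ : ConcaveOn 𝕜 s φ) :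
    ConcaveOn 𝕜 {x : E × 𝕜 | 0 < x.2 ∧ x.2⁻¹ • x.1 ∈ s} fun x ↦ x.2 • φ (x.2⁻¹ • x.1) := by
  refine ⟨convex_setOf_inv_smul_mem hφ.1, ?_⟩
  rintro x ⟨hx, hxs⟩ y ⟨hy, hys⟩ a b ha hb hab
  set t := a * x.2 + b * y.2 with ht_def
  have ht : 0 < t := convex_Ioi (0 : 𝕜) hx hy ha hb hab
  have hweights : a * x.2 / t + b * y.2 / t = 1 := by rw [← add_div, div_self ht.ne']
  calc a • x.2 • φ (x.2⁻¹ • x.1) + b • y.2 • φ (y.2⁻¹ • y.1)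
    _ = t • ((a * x.2 / t) • φ (x.2⁻¹ • x.1) + (b * y.2 / t) • φ (y.2⁻¹ • y.1)) := by
      simp only [smul_add, smul_smul, mul_div_cancel₀ _ ht.ne']
    _ ≤ t • φ ((a * x.2 / t) • x.2⁻¹ • x.1 + (b * y.2 / t) • y.2⁻¹ • y.1) :=
      smul_le_smul_of_nonneg_left
        (hφ.2 hxs hys (by positivity) (by positivity) hweights) ht.le
    _ = t • φ (t⁻¹ • (a • x.1 + b • y.1)) := by
      rw [ht_def, inv_smul_smul_add_smul hx.ne' hy.ne']

end Perspective

section Pseudoconvex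

variable {E : Type*} [NormedAddCommGroup E] [NormedSpace ℝ E] {s : Set E} {f h : E → ℝ}
  {f' : E →L[ℝ] ℝ} {x y : E}

/-- Pseudoconvexity of a real function on a subset of a normed space. Differentiability is required
in full neighbourhoods of the points of `s`, so the notion is intended for open `s`. -/
def PseudoconvexOn (s : Set E) (f : E → ℝ) : Prop :=
  (∀ x ∈ s, DifferentiableAt ℝ f x) ∧
    ∀ x ∈ s, ∀ y ∈ s, 0 ≤ fderiv ℝ f x (y - x) → f x ≤ f y

lemma apply_sub_le_sub_of_convexOn_of_hasFDerivAt (hf : ConvexOn ℝ s f) (hx : x ∈ s) (hy : y ∈ s)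
    (hf' : HasFDerivAt f f' x) : f' (y - x) ≤ f y - f x := by
  have hderiv : HasDerivAt (f ∘ AffineMap.lineMap x y) (f' (y - x)) (0 : ℝ) :=
    HasFDerivAt.comp_hasDerivAt 0 (by simpa using hf') AffineMap.hasDerivAt_lineMap
  simpa [slope] using (hf.comp_affineMap (AffineMap.lineMap x y)).le_slope_of_hasDerivAt
    (by simpa using hx) (by simpa using hy) zero_lt_one hderiv

lemma sub_le_apply_sub_of_concaveOn_of_hasFDerivAt (hf : ConcaveOn ℝ s f) (hx : x ∈ s) (hy : y ∈ s)
    (hf' : HasFDerivAt f f' x) : f y - f x ≤ f' (y - x) := by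
  have := apply_sub_le_sub_of_convexOn_of_hasFDerivAt hf.neg hx hy hf'.neg
  simp only [Pi.neg_apply, neg_apply] at this
  linarith

lemma fderiv_div_apply (hf : DifferentiableAt ℝ f x) (hh : DifferentiableAt ℝ h x) (hx : h x ≠ 0)
    (v : E) :
    fderiv ℝ (fun z ↦ f z / h z) x v =
      (fderiv ℝ f x v * h x - f x * fderiv ℝ h x v) / h x ^ 2 := by
  have hdiff : DifferentiableAt ℝ (fun z ↦ f z / h z) x := by fun_prop (disch := exact hx)
  have hline := (hf.hasFDerivAt.hasLineDerivAt v).fun_div (hh.hasFDerivAt.hasLineDerivAt v)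
    (by simpa using hx)
  simp only [zero_smul, add_zero] at hline
  exact (hdiff.hasFDerivAt.hasLineDerivAt v).unique hline

lemma pseudoconvexOn_div (hf : ConvexOn ℝ s f) (hh : ConcaveOn ℝ s h)
    (hf_diff : ∀ x ∈ s, DifferentiableAt ℝ f x) (hh_diff : ∀ x ∈ s, DifferentiableAt ℝ h x)
    (hf_nonneg : ∀ x ∈ s, 0 ≤ f x) (hh_pos : ∀ x ∈ s, 0 < h x) :
    PseudoconvexOn s fun x ↦ f x / h x := by
  refine ⟨fun x hx ↦ ?_, fun x hx y hy hxy ↦ ?_⟩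
  · have hfx := hf_diff x hx
    have hhx := hh_diff x hx
    fun_prop (disch := exact (hh_pos x hx).ne')
  · have hhx := hh_pos x hx
    rw [fderiv_div_apply (hf_diff x hx) (hh_diff x hx) hhx.ne', le_div_iff₀ (by positivity),
      zero_mul, sub_nonneg] at hxy
    have hcross : f x * (h y - h x) ≤ (f y - f x) * h x :=
      calc f x * (h y - h x)
        _ ≤ f x * fderiv ℝ h x (y - x) := mul_le_mul_of_nonneg_left
            (sub_le_apply_sub_of_concaveOn_of_hasFDerivAt hh hx hy (hh_diff x hx).hasFDerivAt)
            (hf_nonneg x hx)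
        _ ≤ fderiv ℝ f x (y - x) * h x := hxy
        _ ≤ (f y - f x) * h x := mul_le_mul_of_nonneg_right
            (apply_sub_le_sub_of_convexOn_of_hasFDerivAt hf hx hy (hf_diff x hx).hasFDerivAt)
            hhx.le
    rw [div_le_div_iff₀ hhx (hh_pos y hy)]
    linarith

end Pseudoconvex

lemma concaveOn_logb_one_add_mul {b : ℝ} (hb : 1 < b) (a : ℝ) :
    ConcaveOn ℝ {u | 0 < 1 + a * u} fun u ↦ Real.logb b (1 + a * u) := by
  have hlog := (strictConcaveOn_log_Ioi.concaveOn.translate_right 1).comp_linearMap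
    (LinearMap.mulLeft ℝ a)
  simpa [Real.logb, div_eq_inv_mul, Function.comp_def, Set.preimage] using
    hlog.smul (inv_nonneg.2 (Real.log_pos hb).le)

section TransmissionRate

/-- The uplink rate `r(p, B)` for channel gain `g` and noise density `N₀`, at the pair `x = (p, B)`
of transmission power and bandwidth. -/
noncomputable def transmissionRate (g N₀ : ℝ) (x : ℝ × ℝ) : ℝ :=
  x.2 * Real.logb 2 (1 + x.1 * g / (N₀ * x.2))

variable {g N₀ : ℝ} {x : ℝ × ℝ}

lemma concaveOn_transmissionRate :
    ConcaveOn ℝ {x | 0 < x.2 ∧ 0 < 1 + x.1 * g / (N₀ * x.2)} (transmissionRate g N₀) := by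
  have hsnr (x : ℝ × ℝ) : x.1 * g / (N₀ * x.2) = g / N₀ * (x.2⁻¹ • x.1) := by
    rw [smul_eq_mul, ← div_eq_inv_mul, div_mul_div_comm, mul_comm g]
  unfold transmissionRate
  simp only [hsnr]
  exact concaveOn_perspective (concaveOn_logb_one_add_mul one_lt_two (g / N₀))

lemma differentiableAt_transmissionRate (hN₀ : N₀ ≠ 0) (hB : x.2 ≠ 0)
    (hx : 1 + x.1 * g / (N₀ * x.2) ≠ 0) : DifferentiableAt ℝ (transmissionRate g N₀) x := by
  unfold transmissionRate Real.logb
  fun_prop (disch := first | assumption | exact mul_ne_zero hN₀ hB)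

lemma transmissionRate_pos (hg : 0 < g) (hN₀ : 0 < N₀) (hp : 0 < x.1) (hB : 0 < x.2) :
    0 < transmissionRate g N₀ x :=
  mul_pos hB (Real.logb_pos one_lt_two (lt_add_of_pos_right 1 (by positivity)))

end TransmissionRate

/-- `F(p,B) = c·p / r(p,B)` is pseudoconvex on the open positive
quadrant `Q`: it is differentiable on `Q`, and whenever the Fréchet derivative
of `F` at a point of `Q` in the direction of another point of `Q` is
nonnegative, the value at the second point is at least the value at the
first. -/
theorem ratio_pseudoconvexOn (g N₀ c : ℝ) (hg : 0 < g) (hN₀ : 0 < N₀) (hc : 0 < c)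
    (Q : Set (ℝ × ℝ)) (hQ : Q = {x : ℝ × ℝ | 0 < x.1 ∧ 0 < x.2})
    (F : ℝ × ℝ → ℝ)
    (hF : F = fun x : ℝ × ℝ =>
      c * x.1 / (x.2 * Real.logb 2 (1 + x.1 * g / (N₀ * x.2)))) :
    (∀ x ∈ Q, DifferentiableAt ℝ F x) ∧
    (∀ x ∈ Q, ∀ y ∈ Q, 0 ≤ fderiv ℝ F x (y - x) → F x ≤ F y) := by
  subst hQ hF
  have hQ_convex : Convex ℝ {x : ℝ × ℝ | 0 < x.1 ∧ 0 < x.2} := (convex_Ioi 0).prod (convex_Ioi 0)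
  have h_power : ConvexOn ℝ {x : ℝ × ℝ | 0 < x.1 ∧ 0 < x.2} fun x ↦ c * x.1 :=
    (c • LinearMap.fst ℝ ℝ ℝ).convexOn hQ_convex
  have h_rate : ConcaveOn ℝ {x : ℝ × ℝ | 0 < x.1 ∧ 0 < x.2} (transmissionRate g N₀) :=
    concaveOn_transmissionRate.subset (fun x ⟨hp, hB⟩ ↦ ⟨hB, by positivity⟩) hQ_convex
  have h_rate_diff (x : ℝ × ℝ) (hx : 0 < x.1 ∧ 0 < x.2) :
      DifferentiableAt ℝ (transmissionRate g N₀) x := by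
    obtain ⟨hp, hB⟩ := hx
    exact differentiableAt_transmissionRate hN₀.ne' hB.ne' (by positivity)
  exact pseudoconvexOn_div h_power h_rate (fun x _ ↦ by fun_prop) h_rate_diff
    (fun x hx ↦ (mul_pos hc hx.1).le) fun x hx ↦ transmissionRate_pos hg hN₀ hx.1 hx.2
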